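/- Let u be an information structure on K × (C×C₁×C₂) × D, and define v = marg_{K×(C×C₁)×D}u, u' = marg_{K×(C×C₂)×D}u, v' = marg_{K×C×D}u. If under u the signal c₁ is conditionally independent from (c, c₂, d) given the state k, then d(u', v') ≥ d(u, v): the marginal value of the extra signal c₂ is smaller in the presence of c₁ (informational substitutes). -/

import Mathlib

open scoped BigOperators ENNReal

namespace ValueDistance

/-- An information structure: a probability distribution on `K × ℕ × ℕ`
(state, signal of player 1, signal of player 2). -/
abbrev InfoStruct (K : Type) := PMF (K × ℕ × ℕ)

/-- A behavior strategy / garbling : a map `ℕ → Δ(ℕ)`. -/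
abbrev Garbling : Type := ℕ → PMF ℕ

variable {K : Type}

/-- `g` is a payoff function with action bound `L` : values in `[-1,1]`,
`g k i j = -1` when `i ≥ L`, and `g k i j = 1` when `i < L` and `j ≥ L`. -/
def IsPayoffL (L : ℕ) (g : K → ℕ → ℕ → ℝ) : Prop :=
  (∀ k i j, g k i j ∈ Set.Icc (-1 : ℝ) 1) ∧
  (∀ k i j, L ≤ i → g k i j = -1) ∧
  (∀ k i j, i < L → L ≤ j → g k i j = 1)

/-- `g` belongs to the set `𝒢` of payoff functions. -/
def IsPayoff (g : K → ℕ → ℕ → ℝ) : Prop := ∃ L, IsPayoffL L g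

/-- `g` belongs to the set `𝒢₁` of single-agent (player 1) problems. -/
def IsPayoff1 (g : K → ℕ → ℕ → ℝ) : Prop :=
  IsPayoff g ∧ ∀ k i j j', g k i j = g k i j'

/-- Expected payoff in the Bayesian game `Γ(u,g)` when player 1 uses the behavior
strategy `σ` and player 2 uses `τ`. -/
noncomputable def payoff (u : InfoStruct K) (g : K → ℕ → ℕ → ℝ)
    (σ τ : Garbling) : ℝ :=
  ∑' (x : K × ℕ × ℕ) (i : ℕ) (j : ℕ),
    (u x).toReal * (σ x.2.1 i).toReal * (τ x.2.2 j).toReal * g x.1 i j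

/-- The value `val(u,g)` of the zero-sum Bayesian game `Γ(u,g)`
(the common value of `sup inf` and `inf sup` of the expected payoff;
we take `sup inf` as the definition). -/
noncomputable def val (u : InfoStruct K) (g : K → ℕ → ℕ → ℝ) : ℝ :=
  ⨆ σ : Garbling, ⨅ τ : Garbling, payoff u g σ τ

/-- Total variation distance `‖u − v‖`. -/
noncomputable def tv {α : Type} (u v : PMF α) : ℝ :=
  ∑' x : α, |(u x).toReal - (v x).toReal|

/-- `q.u` : player 1's signal garbled through `q`. -/
noncomputable def garbleLeft (q : Garbling) (u : InfoStruct K) : InfoStruct K :=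
  u.bind (fun x => (q x.2.1).map (fun c => (x.1, c, x.2.2)))

/-- `u.q` : player 2's signal garbled through `q`. -/
noncomputable def garbleRight (u : InfoStruct K) (q : Garbling) : InfoStruct K :=
  u.bind (fun x => (q x.2.2).map (fun d => (x.1, x.2.1, d)))

/-- The value-based distance `d(u,v) = sup_{g ∈ 𝒢} |val(u,g) − val(v,g)|`. -/
noncomputable def dVal (u v : InfoStruct K) : ℝ :=
  ⨆ g : {g : K → ℕ → ℕ → ℝ // IsPayoff g}, |val u g.1 - val v g.1|

/-- The single-agent distance `d₁(u,v) = sup_{g ∈ 𝒢₁} |val(u,g) − val(v,g)|`. -/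
noncomputable def d1 (u v : InfoStruct K) : ℝ :=
  ⨆ g : {g : K → ℕ → ℕ → ℝ // IsPayoff1 g}, |val u g.1 - val v g.1|

/-- Marginal of an information structure on `K × ℕ` (state, player 1's signal). -/
noncomputable def marg1 (u : InfoStruct K) : PMF (K × ℕ) :=
  u.map (fun x => (x.1, x.2.1))

/-- Garbling of a single-agent information structure:
`(q.w)(k,c) = Σ_s w(k,s)·q(s)({c})`. -/
noncomputable def garble1 (q : Garbling) (w : PMF (K × ℕ)) : PMF (K × ℕ) :=
  w.bind (fun x => (q x.2).map (fun c => (x.1, c)))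

/-- Marginal of an information structure on the states. -/
noncomputable def margK (u : InfoStruct K) : PMF K := u.map Prod.fst

/-- Marginal of an information structure on `K × ℕ` (state, player 2's signal). -/
noncomputable def margKD (u : InfoStruct K) : PMF (K × ℕ) :=
  u.map (fun x => (x.1, x.2.2))

/-- `σ.q` : on signal `c`, draw `c'` according to `q(c)` and play `σ(c')`. -/
noncomputable def compGarble (σ q : Garbling) : Garbling :=
  fun c => (q c).bind σ

/-- `u ∈ 𝒰(L)` : both players' signals are `< L` with probability 1. -/
def InU (L : ℕ) (u : InfoStruct K) : Prop :=
  ∀ x : K × ℕ × ℕ, u x ≠ 0 → x.2.1 < L ∧ x.2.2 < L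

/-- `q ∈ 𝒬(L)` : garbling with values supported on `{0,…,L−1}`. -/
def GarblingIn (L : ℕ) (q : Garbling) : Prop :=
  ∀ n m, q n m ≠ 0 → m < L

/-- The two players' signals are conditionally independent given the state:
`u(k)·u(k,c,d) = u(k,c)·u(k,d)` for all `k, c, d`
(equivalently `u(c,d|k) = u(c|k)·u(d|k)` whenever `u(k) > 0`). -/
def CondIndep (u : InfoStruct K) : Prop :=
  ∀ (k : K) (c d : ℕ),
    (∑' y : ℕ × ℕ, u (k, y)) * u (k, c, d)
      = (∑' d' : ℕ, u (k, c, d')) * (∑' c' : ℕ, u (k, c', d))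

end ValueDistance

/-!
Conditional independence makes the law of `c₁` a function `P k` of the state, so `u` and `v` arise
from `u'` and `v'` by giving player 1 an extra signal drawn from `P k`. Instead of reacting to this
draw, player 1 may commit beforehand to a policy, a map from draws to actions: averaging the payoff
of a policy over `P k` gives a payoff function on the original structure. With actions below `L`
and draws below `N` there are `L ^ N` policies, so this is an element of `𝒢`, and its values at `u'`
and `v'` differ from the values of the given game at `u` and `v` by at most twice the probability
that the draw is `≥ N`. Let `N` tend to infinity.
-/

namespace ValueDistance

section ProductLaws

variable {α β γ : Type*}

/-- The law of `(a, b)` when `a` has law `p` and `b` has conditional law `κ a`. -/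
noncomputable def compProd (p : PMF α) (κ : α → PMF β) : PMF (α × β) :=
  p.bind fun a ↦ (κ a).map (Prod.mk a)

lemma compProd_apply (p : PMF α) (κ : α → PMF β) (x : α × β) :
    compProd p κ x = p x.1 * κ x.1 x.2 := by
  classical
  obtain ⟨a, b⟩ := x
  rw [compProd, PMF.bind_apply, tsum_eq_single a fun a' ha' ↦ ?_, PMF.map_apply,
    tsum_eq_single b fun b' hb' ↦ ?_]
  · simp
  · simp [hb'.symm]
  · simp [PMF.map_apply, ha'.symm]

lemma compProd_map_left (p : PMF α) (f : α → γ) (κ : γ → PMF β) :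
    compProd (p.map f) κ = (compProd p (κ ∘ f)).map (Prod.map f id) := by
  simp only [compProd, PMF.bind_map, PMF.map_bind, PMF.map_comp]
  rfl

lemma map_equiv_apply (p : PMF α) (e : α ≃ β) (b : β) : p.map e b = p (e.symm b) := by
  classical
  rw [PMF.map_apply, tsum_eq_single (e.symm b) fun a ha ↦ if_neg ?_]
  · simp
  · rintro rfl
    simp at ha

lemma map_fst_apply (p : PMF (α × β)) (a : α) : p.map Prod.fst a = ∑' b, p (a, b) := by
  classical
  rw [PMF.map_apply, ENNReal.tsum_prod', tsum_eq_single a fun a' ha' ↦ by simp [ha'.symm]]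
  simp

lemma exists_pmf_pi {ι : Type*} [Finite ι] (p : ι → PMF α) :
    ∃ Q : PMF (ι → α), ∀ i, Q.map (Function.eval i) = p i := by
  classical
  cases nonempty_fintype ι
  suffices h : ∀ s : Finset ι, ∃ Q : PMF (ι → α), ∀ i ∈ s, Q.map (Function.eval i) = p i by
    simpa using h Finset.univ
  intro s
  induction s using Finset.induction with
  | empty => exact ⟨PMF.pure fun i ↦ (p i).support_nonempty.some, by simp⟩
  | insert i s hi ih =>
    obtain ⟨Q, hQ⟩ := ih
    refine ⟨Q.bind fun f ↦ (p i).map (Function.update f i), fun j hj ↦ ?_⟩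
    rw [PMF.map_bind]
    simp only [PMF.map_comp]
    obtain rfl | hji := eq_or_ne j i
    · have eval_update (f : ι → α) : Function.eval j ∘ Function.update f j = id := by
        ext; simp
      simp only [eval_update, PMF.map_id, PMF.bind_const]
    · have eval_update (f : ι → α) :
          Function.eval j ∘ Function.update f i = Function.const α (f j) := by
        ext; simp [hji]
      simp only [eval_update, PMF.map_const]
      exact hQ j (Finset.mem_of_mem_insert_of_ne hj hji)

end ProductLaws

section Disintegration

variable {K α β : Type*}

lemma exists_pmf_eq_tsum_mul [Nonempty β] {f : β → ℝ≥0∞} (hf : ∑' b, f b ≠ ∞) :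
    ∃ q : PMF β, ∀ b, f b = (∑' b', f b') * q b := by
  by_cases h : ∑' b, f b = 0
  · exact ⟨PMF.pure (Classical.arbitrary β), fun b ↦ by simp [h, ENNReal.tsum_eq_zero.1 h b]⟩
  · refine ⟨PMF.normalize f h hf, fun b ↦ ?_⟩
    rw [PMF.normalize_apply, mul_left_comm, ENNReal.mul_inv_cancel h hf, mul_one]

lemma exists_eq_compProd_of_condIndep (p : PMF ((K × α) × β))
    (hp : ∀ k x y, (∑' z : α × β, p ((k, z.1), z.2)) * p ((k, x), y)
      = (∑' x', p ((k, x'), y)) * ∑' y', p ((k, x), y')) :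
    ∃ P : K → PMF β, p = compProd (p.map Prod.fst) (P ∘ Prod.fst) := by
  have : Nonempty β := ⟨p.support_nonempty.some.2⟩
  have mass_eq (k : K) : ∑' y, ∑' x, p ((k, x), y) = ∑' z : α × β, p ((k, z.1), z.2) := by
    rw [ENNReal.tsum_prod', ENNReal.tsum_comm]
  have mass_ne_top (k : K) : ∑' z : α × β, p ((k, z.1), z.2) ≠ ∞ := by
    have inj : Function.Injective fun z : α × β ↦ ((k, z.1), z.2) := fun z z' h ↦ by
      simpa [Prod.ext_iff] using h
    exact ne_top_of_le_ne_top p.tsum_coe_ne_top (ENNReal.tsum_comp_le_tsum_of_injective inj p)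
  choose P hP using fun k ↦ exists_pmf_eq_tsum_mul (mass_eq k ▸ mass_ne_top k)
  refine ⟨P, PMF.ext fun ⟨⟨k, x⟩, y⟩ ↦ ?_⟩
  rw [compProd_apply, map_fst_apply, Function.comp_apply]
  by_cases mass_zero : ∑' z : α × β, p ((k, z.1), z.2) = 0
  · have p_zero (x : α) (y : β) : p ((k, x), y) = 0 := ENNReal.tsum_eq_zero.1 mass_zero (x, y)
    simp [p_zero]
  · refine (ENNReal.mul_right_inj mass_zero (mass_ne_top k)).1 ?_
    rw [hp, hP, mass_eq, mul_right_comm, mul_assoc]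

end Disintegration

section Expectation

variable {α β : Type*} {C : ℝ}

/-- The expectation of `f` under `p`, equal to `0` when the series is not summable. -/
noncomputable def expect (p : PMF α) (f : α → ℝ) : ℝ := ∑' a, (p a).toReal * f a

lemma hasSum_toReal (p : PMF α) : HasSum (fun a ↦ (p a).toReal) 1 := by
  convert ENNReal.hasSum_toReal p.tsum_coe_ne_top
  rw [← ENNReal.tsum_toReal_eq p.apply_ne_top, p.tsum_coe, ENNReal.toReal_one]

lemma abs_toReal_mul_le (p : PMF α) {f : α → ℝ} (hf : ∀ a, |f a| ≤ C) (a : α) :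
    |(p a).toReal * f a| ≤ (p a).toReal * C := by
  rw [abs_mul, ENNReal.abs_toReal]
  exact mul_le_mul_of_nonneg_left (hf a) ENNReal.toReal_nonneg

lemma summable_toReal_mul (p : PMF α) {f : α → ℝ} (hf : ∀ a, |f a| ≤ C) :
    Summable fun a ↦ (p a).toReal * f a :=
  ((hasSum_toReal p).summable.mul_right C).of_norm_bounded (abs_toReal_mul_le p hf)

lemma expect_mono (p : PMF α) {f g : α → ℝ} {D : ℝ} (hf : ∀ a, |f a| ≤ C) (hg : ∀ a, |g a| ≤ D)
    (hfg : ∀ a, f a ≤ g a) : expect p f ≤ expect p g :=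
  (summable_toReal_mul p hf).tsum_le_tsum
    (fun a ↦ mul_le_mul_of_nonneg_left (hfg a) ENNReal.toReal_nonneg) (summable_toReal_mul p hg)

lemma expect_nonneg (p : PMF α) {f : α → ℝ} (hf : ∀ a, 0 ≤ f a) : 0 ≤ expect p f :=
  tsum_nonneg fun a ↦ mul_nonneg ENNReal.toReal_nonneg (hf a)

lemma expect_const (p : PMF α) (c : ℝ) : expect p (fun _ ↦ c) = c := by
  rw [expect, tsum_mul_right, (hasSum_toReal p).tsum_eq, one_mul]

lemma expect_add_const_mul (p : PMF α) {f g : α → ℝ} {D : ℝ} (hf : ∀ a, |f a| ≤ C)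
    (hg : ∀ a, |g a| ≤ D) (c : ℝ) :
    expect p (fun a ↦ f a + c * g a) = expect p f + c * expect p g := by
  simp only [expect, mul_add, mul_left_comm _ c]
  rw [(summable_toReal_mul p hf).tsum_add ((summable_toReal_mul p hg).mul_left c), tsum_mul_left]

lemma abs_expect_le (p : PMF α) {f : α → ℝ} (hf : ∀ a, |f a| ≤ C) : |expect p f| ≤ C := by
  rw [← expect_const p C]
  exact tsum_of_norm_bounded (f := fun a ↦ (p a).toReal * f a)
    ((hasSum_toReal p).summable.mul_right C).hasSum (abs_toReal_mul_le p hf)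

lemma expect_bind (p : PMF α) (κ : α → PMF β) {f : β → ℝ} (hf : ∀ b, |f b| ≤ C) :
    expect (p.bind κ) f = expect p fun a ↦ expect (κ a) f := by
  have summable_joint : Summable fun x : α × β ↦ (p x.1).toReal * ((κ x.1 x.2).toReal * f x.2) := by
    simpa only [compProd_apply, ENNReal.toReal_mul, mul_assoc] using
      summable_toReal_mul (compProd p κ) (f := fun x ↦ f x.2) fun x ↦ hf x.2
  simp only [expect, ← tsum_mul_left]
  rw [← Summable.tsum_comm (f := fun a b ↦ (p a).toReal * ((κ a b).toReal * f b)) summable_joint]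
  refine tsum_congr fun b ↦ ?_
  rw [PMF.bind_apply, ENNReal.tsum_toReal_eq fun a ↦
    ENNReal.mul_ne_top (p.apply_ne_top a) ((κ a).apply_ne_top b), ← tsum_mul_right]
  simp only [ENNReal.toReal_mul, mul_assoc]

lemma expect_pure (a : α) (f : α → ℝ) : expect (PMF.pure a) f = f a := by
  classical
  rw [expect, tsum_eq_single a fun b hb ↦ by simp [hb]]
  simp

lemma expect_map (p : PMF α) (h : α → β) {f : β → ℝ} (hf : ∀ b, |f b| ≤ C) :
    expect (p.map h) f = expect p (f ∘ h) := by
  rw [← PMF.bind_pure_comp, expect_bind _ _ hf]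
  simp only [Function.comp_apply, expect_pure]
  rfl

lemma expect_compProd (p : PMF α) (κ : α → PMF β) {f : α × β → ℝ} (hf : ∀ x, |f x| ≤ C) :
    expect (compProd p κ) f = expect p fun a ↦ expect (κ a) fun b ↦ f (a, b) := by
  rw [compProd, expect_bind _ _ hf]
  simp only [expect_map _ _ hf]
  rfl

lemma expect_comm (p : PMF α) (q : PMF β) {f : α → β → ℝ} (hf : ∀ a b, |f a b| ≤ C) :
    expect p (fun a ↦ expect q (f a)) = expect q fun b ↦ expect p fun a ↦ f a b := by
  have h := congrArg (expect · fun x : α × β ↦ f x.1 x.2)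
    (PMF.bind_comm p q fun a b ↦ PMF.pure (a, b))
  simpa only [expect_bind _ _ fun x : α × β ↦ hf x.1 x.2, expect_pure] using h

lemma tendsto_expect_indicator_le (p : PMF α) (f : α → ℕ) :
    Filter.Tendsto (fun N ↦ expect p ({a | N ≤ f a}.indicator 1)) Filter.atTop (nhds 0) := by
  have h : Filter.Tendsto (fun N ↦ expect p ({a | N ≤ f a}.indicator 1)) Filter.atTop
      (nhds (∑' _ : α, 0)) := by
    refine tendsto_tsum_of_dominated_convergence (hasSum_toReal p).summable (fun a ↦ ?_)
      (.of_forall fun N a ↦ ?_)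
    · refine tendsto_const_nhds.congr' ?_
      filter_upwards [Filter.eventually_gt_atTop (f a)] with N hN
      simp [hN]
    · refine (abs_toReal_mul_le p (C := 1) (fun a ↦ ?_) a).trans_eq (mul_one _)
      by_cases ha : N ≤ f a <;> simp [ha]
  simpa using h

end Expectation

section MixedPayoff

variable {α β γ : Type*} {C : ℝ} {h : α → β → ℝ}

/-- The bilinear extension of the matrix game `h` to mixed actions. -/
noncomputable def mixedPayoff (h : α → β → ℝ) (s : PMF α) (t : PMF β) : ℝ :=
  expect s fun i ↦ expect t (h i)

lemma abs_mixedPayoff_le (hh : ∀ i j, |h i j| ≤ C) (s : PMF α) (t : PMF β) :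
    |mixedPayoff h s t| ≤ C :=
  abs_expect_le s fun i ↦ abs_expect_le t (hh i)

lemma mixedPayoff_map_left (hh : ∀ i j, |h i j| ≤ C) (f : γ → α) (s : PMF γ) (t : PMF β) :
    mixedPayoff h (s.map f) t = mixedPayoff (h ∘ f) s t :=
  expect_map s f fun i ↦ abs_expect_le t (hh i)

lemma mixedPayoff_mono {h' : α → β → ℝ} {C' : ℝ} (hh : ∀ i j, |h i j| ≤ C)
    (hh' : ∀ i j, |h' i j| ≤ C') (le : ∀ i j, h i j ≤ h' i j) (s : PMF α) (t : PMF β) :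
    mixedPayoff h s t ≤ mixedPayoff h' s t :=
  expect_mono s (fun i ↦ abs_expect_le t (hh i)) (fun i ↦ abs_expect_le t (hh' i))
    fun i ↦ expect_mono t (hh i) (hh' i) (le i)

lemma mixedPayoff_expect {h : γ → α → β → ℝ} (hh : ∀ c i j, |h c i j| ≤ C) (p : PMF γ)
    (s : PMF α) (t : PMF β) :
    mixedPayoff (fun i j ↦ expect p fun c ↦ h c i j) s t
      = expect p fun c ↦ mixedPayoff (h c) s t := by
  simp only [mixedPayoff, expect_comm p s fun c i ↦ abs_expect_le t (hh c i),
    expect_comm p t fun c j ↦ hh c _ j]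

end MixedPayoff

section Value

variable {K : Type} {u v : InfoStruct K} {g h : K → ℕ → ℕ → ℝ} {C : ℝ} {L : ℕ}

lemma payoff_eq_expect (u : InfoStruct K) (g : K → ℕ → ℕ → ℝ) (σ τ : Garbling) :
    payoff u g σ τ = expect u fun x ↦ mixedPayoff (g x.1) (σ x.2.1) (τ x.2.2) := by
  simp only [payoff, mixedPayoff, expect, ← tsum_mul_left, mul_assoc]

lemma abs_payoff_le (u : InfoStruct K) (hg : ∀ k i j, |g k i j| ≤ C) (σ τ : Garbling) :
    |payoff u g σ τ| ≤ C := by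
  rw [payoff_eq_expect]
  exact abs_expect_le u fun x ↦ abs_mixedPayoff_le (hg x.1) _ _

lemma bddBelow_range_payoff (u : InfoStruct K) (hg : ∀ k i j, |g k i j| ≤ C) (σ : Garbling) :
    BddBelow (Set.range (payoff u g σ)) :=
  ⟨-C, Set.forall_mem_range.2 fun τ ↦ neg_le_of_abs_le (abs_payoff_le u hg σ τ)⟩

lemma iInf_payoff_le (u : InfoStruct K) (hg : ∀ k i j, |g k i j| ≤ C) (σ : Garbling) :
    ⨅ τ, payoff u g σ τ ≤ C :=
  (ciInf_le (bddBelow_range_payoff u hg σ) default).trans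
    (le_of_abs_le (abs_payoff_le u hg σ default))

lemma bddAbove_range_iInf_payoff (u : InfoStruct K) (hg : ∀ k i j, |g k i j| ≤ C) :
    BddAbove (Set.range fun σ ↦ ⨅ τ, payoff u g σ τ) :=
  ⟨C, Set.forall_mem_range.2 (iInf_payoff_le u hg)⟩

lemma val_le_val_add (hg : ∀ k i j, |g k i j| ≤ C) (hh : ∀ k i j, |h k i j| ≤ C) {ε : ℝ}
    (H : ∀ σ, ∃ σ', ∀ τ, payoff u g σ τ ≤ payoff v h σ' τ + ε) : val u g ≤ val v h + ε := by
  refine ciSup_le fun σ ↦ ?_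
  obtain ⟨σ', hσ'⟩ := H σ
  calc ⨅ τ, payoff u g σ τ
      ≤ ⨅ τ, (payoff v h σ' τ + ε) := ciInf_mono (bddBelow_range_payoff u hg σ) hσ'
    _ = (⨅ τ, payoff v h σ' τ) + ε := (ciInf_add (bddBelow_range_payoff v hh σ') ε).symm
    _ ≤ val v h + ε := by gcongr; exact le_ciSup (bddAbove_range_iInf_payoff v hh) σ'

lemma abs_val_le (u : InfoStruct K) (hg : ∀ k i j, |g k i j| ≤ C) : |val u g| ≤ C := by
  refine abs_le.2 ⟨?_, ciSup_le (iInf_payoff_le u hg)⟩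
  exact (le_ciInf fun τ ↦ neg_le_of_abs_le (abs_payoff_le u hg default τ)).trans
    (le_ciSup (bddAbove_range_iInf_payoff u hg) default)

lemma val_const (u : InfoStruct K) (c : ℝ) : val u (fun _ _ _ ↦ c) = c := by
  simp [val, payoff_eq_expect, mixedPayoff, expect_const]

lemma IsPayoffL.abs_le_one (hg : IsPayoffL L g) (k : K) (i j : ℕ) : |g k i j| ≤ 1 :=
  abs_le.2 (hg.1 k i j)

lemma dVal_nonneg (u v : InfoStruct K) : 0 ≤ dVal u v :=
  Real.iSup_nonneg fun _ ↦ abs_nonneg _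

lemma abs_val_sub_val_le_dVal (u v : InfoStruct K) (hg : IsPayoff g) :
    |val u g - val v g| ≤ dVal u v := by
  refine le_ciSup (f := fun g : {g : K → ℕ → ℕ → ℝ // IsPayoff g} ↦ |val u g.1 - val v g.1|)
    ⟨1 + 1, Set.forall_mem_range.2 ?_⟩ ⟨g, hg⟩
  rintro ⟨g, L, hg⟩
  exact (abs_sub _ _).trans (add_le_add (abs_val_le u hg.abs_le_one) (abs_val_le v hg.abs_le_one))

end Value

section PolicyGame

variable {K : Type} {g : K → ℕ → ℕ → ℝ} {C : ℝ} {L N : ℕ}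

/-- The structure obtained from `m` when player 1 also observes a draw from `P k`, independent of
the signals given the state `k`; `enc` encodes the old signal and the draw as a single signal. -/
noncomputable def augment (m : InfoStruct K) (P : K → PMF ℕ) (enc : ℕ → ℕ → ℕ) : InfoStruct K :=
  (compProd m (P ∘ Prod.fst)).map fun z ↦ (z.1.1, enc z.1.2.1 z.2, z.1.2.2)

/-- The game in which player 1 chooses, before the draw from `P k`, a policy `i` that plays the
action `act i c` of `g` when the draw is `c`. -/
noncomputable def policyGame (P : K → PMF ℕ) (act : ℕ → ℕ → ℕ) (g : K → ℕ → ℕ → ℝ) :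
    K → ℕ → ℕ → ℝ :=
  fun k i j ↦ expect (P k) fun c ↦ g k (act i c) j

lemma abs_policyGame_le (P : K → PMF ℕ) (act : ℕ → ℕ → ℕ) (hg : ∀ k i j, |g k i j| ≤ C) (k : K)
    (i j : ℕ) : |policyGame P act g k i j| ≤ C :=
  abs_expect_le _ fun c ↦ hg k (act i c) j

lemma payoff_augment (m : InfoStruct K) (P : K → PMF ℕ) (enc : ℕ → ℕ → ℕ)
    (hg : ∀ k i j, |g k i j| ≤ C) (σ τ : Garbling) :
    payoff (augment m P enc) g σ τ = expect (compProd m (P ∘ Prod.fst)) fun z ↦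
      mixedPayoff (g z.1.1) (σ (enc z.1.2.1 z.2)) (τ z.1.2.2) := by
  rw [payoff_eq_expect]
  exact expect_map _ _ fun x : K × ℕ × ℕ ↦ abs_mixedPayoff_le (hg x.1) _ _

lemma payoff_policyGame (m : InfoStruct K) (P : K → PMF ℕ) (act : ℕ → ℕ → ℕ)
    (hg : ∀ k i j, |g k i j| ≤ C) (σ τ : Garbling) :
    payoff m (policyGame P act g) σ τ = expect (compProd m (P ∘ Prod.fst)) fun z ↦
      mixedPayoff (g z.1.1) ((σ z.1.2.1).map (act · z.2)) (τ z.1.2.2) := by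
  rw [payoff_eq_expect]
  refine Eq.trans ?_ (expect_compProd _ _ fun z : (K × ℕ × ℕ) × ℕ ↦
    abs_mixedPayoff_le (hg z.1.1) _ _).symm
  congr! with x
  simp only [mixedPayoff_map_left (hg x.1)]
  exact mixedPayoff_expect (fun c i j ↦ hg x.1 (act i c) j) (P x.1) _ _

lemma val_policyGame_le (m : InfoStruct K) (P : K → PMF ℕ) (act : ℕ → ℕ → ℕ) {enc : ℕ → ℕ → ℕ}
    (henc : Function.Injective2 enc) (hg : ∀ k i j, |g k i j| ≤ C) :
    val m (policyGame P act g) ≤ val (augment m P enc) g := by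
  have dec_enc := Function.leftInverse_invFun henc.uncurry
  set dec := Function.invFun (Function.uncurry enc)
  rw [← add_zero (val (augment m P enc) g)]
  refine val_le_val_add (abs_policyGame_le P act hg) hg fun σ ↦
    ⟨fun s ↦ (σ (dec s).1).map (act · (dec s).2), fun τ ↦ le_of_eq ?_⟩
  have dec_enc' (e c : ℕ) : dec (enc e c) = (e, c) := dec_enc (e, c)
  simp only [payoff_policyGame m P act hg, payoff_augment m P enc hg, dec_enc', add_zero]

/-- The policy `i < L ^ N` prescribes at the draw `n` the `n`-th digit of `i` in base `L`. An index
`i ≥ L ^ N` stands for no policy and prescribes the dominated action `L`. -/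
def policyAction (L N i n : ℕ) : ℕ := if i < L ^ N then i / L ^ n % L else L

lemma exists_policyAction_eq (hL : L ≠ 0) (f : Fin N → ℕ) :
    ∃ i, ∀ n : Fin N, policyAction L N i n = f n % L := by
  have : NeZero L := ⟨hL⟩
  let i : Fin (L ^ N) := finFunctionFinEquiv fun n ↦ Fin.ofNat L (f n)
  refine ⟨i, fun n ↦ (if_pos i.isLt).trans ?_⟩
  exact congrArg Fin.val (congrFun (finFunctionFinEquiv.symm_apply_apply _) n)

lemma exists_map_policyAction_eq (hL : L ≠ 0) (N : ℕ) (p : ℕ → PMF ℕ) :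
    ∃ q : PMF ℕ, ∀ n < N, q.map (policyAction L N · n) = (p n).map (· % L) := by
  obtain ⟨Q, hQ⟩ := exists_pmf_pi fun n : Fin N ↦ p n
  choose code hcode using exists_policyAction_eq (N := N) hL
  refine ⟨Q.map code, fun n hn ↦ ?_⟩
  rw [← hQ ⟨n, hn⟩, PMF.map_comp, PMF.map_comp]
  exact congrArg (PMF.map · Q) (funext fun f ↦ hcode f ⟨n, hn⟩)

lemma isPayoffL_policyGame (hg : IsPayoffL L g) (hN : N ≠ 0) (P : K → PMF ℕ) :
    IsPayoffL (L ^ N) (policyGame P (policyAction L N) g) := by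
  refine ⟨fun k i j ↦ abs_le.1 (abs_policyGame_le P _ hg.abs_le_one k i j),
    fun k i j hi ↦ ?_, fun k i j hi hj ↦ ?_⟩
  · have outcome (c : ℕ) : g k (policyAction L N i c) j = -1 :=
      hg.2.1 k _ j (if_neg hi.not_gt).ge
    simp only [policyGame, outcome, expect_const]
  · have L_pos : 0 < L := Nat.pos_of_ne_zero fun h ↦ by simp [h, hN] at hi
    have outcome (c : ℕ) : g k (policyAction L N i c) j = 1 := by
      refine hg.2.2 k _ j ?_ ((Nat.le_self_pow hN L).trans hj)
      rw [policyAction, if_pos hi]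
      exact Nat.mod_lt _ L_pos
    simp only [policyGame, outcome, expect_const]

lemma IsPayoffL.le_mod (hg : IsPayoffL L g) (k : K) (i j : ℕ) : g k i j ≤ g k (i % L) j := by
  obtain hi | hi := lt_or_ge i L
  · rw [Nat.mod_eq_of_lt hi]
  · rw [hg.2.1 k i j hi]
    exact (hg.1 k _ j).1

lemma val_augment_le (m : InfoStruct K) (P : K → PMF ℕ) (enc : ℕ → ℕ → ℕ) (hg : IsPayoffL L g)
    (hL : L ≠ 0) (N : ℕ) :
    val (augment m P enc) g ≤ val m (policyGame P (policyAction L N) g)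
      + 2 * expect (compProd m (P ∘ Prod.fst)) ({z | N ≤ z.2}.indicator 1) := by
  have abs_g_le := hg.abs_le_one
  refine val_le_val_add abs_g_le (abs_policyGame_le P _ abs_g_le) fun σ ↦ ?_
  choose σ' hσ' using fun e ↦ exists_map_policyAction_eq hL N fun n ↦ σ (enc e n)
  refine ⟨σ', fun τ ↦ ?_⟩
  have abs_indicator_le (z : (K × ℕ × ℕ) × ℕ) :
      |({z | N ≤ z.2}.indicator 1 z : ℝ)| ≤ 1 := by
    by_cases hz : N ≤ z.2 <;> simp [hz]
  have abs_mixed_le (k : K) (s t : PMF ℕ) := abs_mixedPayoff_le (abs_g_le k) s t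
  rw [payoff_augment m P enc abs_g_le, payoff_policyGame m P _ abs_g_le,
    ← expect_add_const_mul _ (fun z ↦ abs_mixed_le _ _ _) abs_indicator_le]
  refine expect_mono _ (C := 1) (D := 1 + 2) (fun z ↦ abs_mixed_le _ _ _) (fun z ↦ ?_) fun z ↦ ?_
  · refine (abs_add_le _ _).trans (add_le_add (abs_mixed_le _ _ _) ?_)
    simpa [abs_mul] using abs_indicator_le z
  obtain hz | hz := lt_or_ge z.2 N
  · simp only [hσ' _ _ hz, mixedPayoff_map_left (abs_g_le _), Set.mem_ofPred_eq, hz.not_ge,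
      not_false_eq_true, Set.indicator_of_notMem, mul_zero, add_zero]
    exact mixedPayoff_mono (abs_g_le _) (fun i ↦ abs_g_le _ _) (hg.le_mod _) _ _
  · simp only [Set.mem_ofPred_eq, hz, Set.indicator_of_mem, Pi.one_apply, mul_one]
    linarith [le_of_abs_le (abs_mixed_le z.1.1 (σ (enc z.1.2.1 z.2)) (τ z.1.2.2)),
      neg_le_of_abs_le (abs_mixed_le z.1.1
        ((σ' z.1.2.1).map (policyAction L N · z.2)) (τ z.1.2.2))]

end PolicyGame

section Augmentation

variable {K : Type} {g : K → ℕ → ℕ → ℝ} {L N : ℕ} {enc enc' : ℕ → ℕ → ℕ}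

lemma augment_map {α : Type*} (m : PMF (K × α)) (s : α → ℕ × ℕ) (P : K → PMF ℕ)
    (enc : ℕ → ℕ → ℕ) :
    augment (m.map (Prod.map id s)) P enc = (compProd m (P ∘ Prod.fst)).map fun z ↦
      (z.1.1, enc (s z.1.2).1 z.2, (s z.1.2).2) := by
  rw [augment, compProd_map_left, PMF.map_comp]
  rfl

lemma abs_val_augment_sub_le (m m' : InfoStruct K) (P : K → PMF ℕ)
    (henc : Function.Injective2 enc) (henc' : Function.Injective2 enc') (hg : IsPayoffL L g)
    (hL : L ≠ 0) (hN : N ≠ 0) :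
    |val (augment m P enc) g - val (augment m' P enc') g| ≤ dVal m m'
      + 2 * (expect (compProd m (P ∘ Prod.fst)) ({z | N ≤ z.2}.indicator 1)
        + expect (compProd m' (P ∘ Prod.fst)) ({z | N ≤ z.2}.indicator 1)) := by
  have dist_le := abs_le.1 (abs_val_sub_val_le_dVal m m' ⟨_, isPayoffL_policyGame hg hN P⟩)
  have tail_nonneg (n : InfoStruct K) :
      0 ≤ expect (compProd n (P ∘ Prod.fst)) ({z | N ≤ z.2}.indicator 1) :=
    expect_nonneg _ fun z ↦ Set.indicator_nonneg (fun _ _ ↦ zero_le_one) z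
  rw [abs_sub_le_iff]
  constructor <;>
    linarith [val_augment_le m P enc hg hL N, val_augment_le m' P enc' hg hL N,
      val_policyGame_le m P (policyAction L N) henc hg.abs_le_one,
      val_policyGame_le m' P (policyAction L N) henc' hg.abs_le_one,
      tail_nonneg m, tail_nonneg m', dist_le.1, dist_le.2]

lemma dVal_augment_le (m m' : InfoStruct K) (P : K → PMF ℕ)
    (henc : Function.Injective2 enc) (henc' : Function.Injective2 enc') :
    dVal (augment m P enc) (augment m' P enc') ≤ dVal m m' := by
  refine Real.iSup_le (fun ⟨g, L, hg⟩ ↦ ?_) (dVal_nonneg m m')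
  obtain rfl | hL := eq_or_ne L 0
  · obtain rfl : g = fun _ _ _ ↦ -1 := by ext k i j; exact hg.2.1 k i j i.zero_le
    simpa only [val_const, sub_self, abs_zero] using dVal_nonneg m m'
  have tails_tendsto := ((tendsto_expect_indicator_le (compProd m (P ∘ Prod.fst)) Prod.snd).add
    (tendsto_expect_indicator_le (compProd m' (P ∘ Prod.fst)) Prod.snd)).const_mul 2
      |>.const_add (dVal m m')
  simp only [add_zero, mul_zero] at tails_tendsto
  refine ge_of_tendsto tails_tendsto ?_
  filter_upwards [Filter.eventually_ne_atTop 0] with N hN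
  exact abs_val_augment_sub_le m m' P henc henc' hg hL hN

end Augmentation

section Separation

variable {K α β γ δ : Type*}

/-- Separates the second signal of player 1 from all other signals. -/
def separateSignals (α β γ δ : Type*) : (α × β × γ) × δ ≃ (α × γ × δ) × β where
  toFun y := ((y.1.1, y.1.2.2, y.2), y.1.2.1)
  invFun z := ((z.1.1, z.2, z.1.2.1), z.1.2.2)

/-- Separates the second signal of player 1 from the state and all other signals. -/
def separate (K α β γ δ : Type*) : K × (α × β × γ) × δ ≃ (K × α × γ × δ) × β :=
  (Equiv.prodCongrRight fun _ ↦ separateSignals α β γ δ).trans (Equiv.prodAssoc K _ _).symm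

lemma exists_map_separate_eq_compProd (w : PMF (K × (α × β × γ) × δ))
    (hci : ∀ k c c₁ c₂ d, (∑' y : (α × β × γ) × δ, w (k, y)) * w (k, (c, c₁, c₂), d)
      = (∑' (c') (c₂') (d'), w (k, (c', c₁, c₂'), d')) * ∑' c₁', w (k, (c, c₁', c₂), d)) :
    ∃ P : K → PMF β, w.map (separate K α β γ δ)
      = compProd ((w.map (separate K α β γ δ)).map Prod.fst) (P ∘ Prod.fst) := by
  refine exists_eq_compProd_of_condIndep _ fun k ⟨c, c₂, d⟩ c₁ ↦ ?_
  have separate_symm (x : α × γ × δ) (y : β) :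
      (separate K α β γ δ).symm ((k, x), y) = (k, (separateSignals α β γ δ).symm (x, y)) := rfl
  simp only [map_equiv_apply, separate_symm]
  rw [(separateSignals α β γ δ).symm.tsum_eq fun y ↦ w (k, y)]
  have h := hci k c c₁ c₂ d
  simp only [ENNReal.tsum_prod'] at h ⊢
  exact h

end Separation

lemma injective2_pair : Function.Injective2 Nat.pair :=
  fun _ _ _ _ h ↦ Nat.pair_eq_pair.1 h

lemma injective2_pair_unpair_insert :
    Function.Injective2 fun e c₁ : ℕ ↦ Nat.pair e.unpair.1 (Nat.pair c₁ e.unpair.2) := by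
  intro e e' c₁ c₁' h
  obtain ⟨h₁, hc₁, h₂⟩ : e.unpair.1 = e'.unpair.1 ∧ c₁ = c₁' ∧ e.unpair.2 = e'.unpair.2 := by
    simpa only [Nat.pair_eq_pair] using h
  exact ⟨Nat.pairEquiv.symm.injective (Prod.ext h₁ h₂), hc₁⟩

theorem informational_substitutes_general (K : Type) (w : PMF (K × (ℕ × ℕ × ℕ) × ℕ))
    (hci : ∀ (k : K) (c c₁ c₂ d : ℕ),
      (∑' y : (ℕ × ℕ × ℕ) × ℕ, w (k, y)) * w (k, (c, c₁, c₂), d)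
        = (∑' (c' : ℕ) (c₂' : ℕ) (d' : ℕ), w (k, (c', c₁, c₂'), d'))
          * (∑' c₁' : ℕ, w (k, (c, c₁', c₂), d))) :
    dVal (w.map (fun x => (x.1, Nat.pair x.2.1.1 (Nat.pair x.2.1.2.1 x.2.1.2.2), x.2.2)))
         (w.map (fun x => (x.1, Nat.pair x.2.1.1 x.2.1.2.1, x.2.2)))
      ≤ dVal (w.map (fun x => (x.1, Nat.pair x.2.1.1 x.2.1.2.2, x.2.2)))
             (w.map (fun x => (x.1, x.2.1.1, x.2.2))) := by
  obtain ⟨P, hP⟩ := exists_map_separate_eq_compProd w hci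
  have augment_marginal (s : ℕ × ℕ × ℕ → ℕ × ℕ) (enc : ℕ → ℕ → ℕ) :
      augment (w.map (Prod.map id s ∘ Prod.fst ∘ separate K ℕ ℕ ℕ ℕ)) P enc
        = w.map ((fun z ↦ (z.1.1, enc (s z.1.2).1 z.2, (s z.1.2).2)) ∘ separate K ℕ ℕ ℕ ℕ) := by
    rw [← PMF.map_comp, ← PMF.map_comp, ← PMF.map_comp, augment_map, ← hP]
  have h := dVal_augment_le
    (w.map (Prod.map id (fun y ↦ (Nat.pair y.1 y.2.1, y.2.2)) ∘ Prod.fst ∘ separate K ℕ ℕ ℕ ℕ))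
    (w.map (Prod.map id (fun y ↦ (y.1, y.2.2)) ∘ Prod.fst ∘ separate K ℕ ℕ ℕ ℕ)) P
    injective2_pair_unpair_insert injective2_pair
  rw [augment_marginal, augment_marginal] at h
  simpa [Function.comp_def, separate, separateSignals] using h

/-- Informational substitutes: if under `w ∈ Δ(K × (C×C₁×C₂) × D)` the signal
`c₁` is conditionally independent from `(c,c₂,d)` given the state `k`, then
`d(u',v') ≥ d(u,v)`, where `u` keeps all of `(c,c₁,c₂)`, `v = marg` dropping
`c₂`, `u' = marg` dropping `c₁`, `v' = marg` dropping both (product signal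
spaces are encoded in `ℕ` via `Nat.pair`). -/
theorem informational_substitutes (K : Type) [Fintype K]
    (hK : 2 ≤ Fintype.card K) (w : PMF (K × (ℕ × ℕ × ℕ) × ℕ))
    (hci : ∀ (k : K) (c c₁ c₂ d : ℕ),
      (∑' y : (ℕ × ℕ × ℕ) × ℕ, w (k, y)) * w (k, (c, c₁, c₂), d)
        = (∑' (c' : ℕ) (c₂' : ℕ) (d' : ℕ), w (k, (c', c₁, c₂'), d'))
          * (∑' c₁' : ℕ, w (k, (c, c₁', c₂), d))) :
    dVal (w.map (fun x => (x.1, Nat.pair x.2.1.1 (Nat.pair x.2.1.2.1 x.2.1.2.2), x.2.2)))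
         (w.map (fun x => (x.1, Nat.pair x.2.1.1 x.2.1.2.1, x.2.2)))
      ≤ dVal (w.map (fun x => (x.1, Nat.pair x.2.1.1 x.2.1.2.2, x.2.2)))
             (w.map (fun x => (x.1, x.2.1.1, x.2.2))) := by
  exact informational_substitutes_general K w hci

end ValueDistance
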